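/- Let n ≥ 2 and k ≥ 0. The set {z_f^C}, where f ranges over all C-multidissections of P_{2n} with exactly k edges, is a ℂ-basis of V^C(n,k), the space of polynomials in ℂ[x] that are homogeneous of degree k in the variables x_{11},…,x_{n1} and homogeneous of degree k in the variables x_{12},…,x_{n2}. -/

import Mathlib

/-!
A C-edge is encoded by a directed arc on the cycle `{0, …, n-1}`: the chord running clockwise from
`a` to `b` for `a < b`, and clockwise from `a` to `b + n` for `b ≤ a` (a diameter if `a = b`). This
is a bijection between C-edges and ordered pairs `(a, b)`. The theorem follows from two facts.

*Spanning.* Attach to vertex `a < n` the vector `(x_{a1}, x_{a2})` and to its antipode the rotated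
vector `(-i x_{a1}, i x_{a2})`. The variable of the C-edge of a chord `{i, j}`, `i < j < 2n`, is then
the normalized determinant `D i j` of the two vectors (`arcVar_arcOf`), so the Ptolemy relation
`D p r * D q s = D p q * D r s + D p s * D q r` rewrites a product of variables of crossing C-edges.
This terminates, since it decreases the sum of the weights `ℓ (2n - ℓ)`, where `ℓ` is the length of
a chord (`arcWt_ptolemy`, `prod_arcVar_mem_span`). As `x_{a1} x_{b2}` is a combination of the
variables of the arcs `(a, b)` and `(b, a)`, every monomial of bidegree `(k, k)` is a combination
of products of `k` variables.

*Counting.* A C-multidissection is determined by the numbers of arcs starting and ending at each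
vertex (`IsCMulti.eq_of_margins`). Suppose two have the same such numbers, and let `(a, b)` be
a shortest arc whose multiplicities differ. The one containing it less often contains a longer
arc starting at `a` and a longer arc ending at `b`, and these two cross. Recording starts as exponents
in column one and ends as exponents in column two gives distinct monomials of bidegree `(k, k)`,
so there are at most `dim V(n, k)` C-multidissections with `k` edges, and a spanning family of at
most that many elements is linearly independent.
-/

open Finset

/-- Two chords `{i,j}` and `{a,b}` of a polygon whose vertices are labeled clockwise by
`ZMod m` (i.e. `0,1,…,m−1`) cross iff their endpoints strictly interleave in cyclic order:
writing the pairs in increasing order of labels as `{p,q}`, `{r,s}` with `p<q`, `r<s`,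
they cross iff `p<r<q<s` or `r<p<s<q`. -/
def crossE {m : ℕ} (i j a b : ZMod m) : Prop :=
  (min i.val j.val < min a.val b.val ∧ min a.val b.val < max i.val j.val ∧
     max i.val j.val < max a.val b.val) ∨
  (min a.val b.val < min i.val j.val ∧ min i.val j.val < max a.val b.val ∧
     max a.val b.val < max i.val j.val)

/-- A C-multidissection of the `2n`-gon `P_{2n}`, whose vertices `1,…,n,1̄,…,n̄`
(clockwise) are encoded as `ZMod (2n)` (with `a ↦ a−1` and `ā ↦ a−1+n`).  It is encoded
as a symmetric, antipodally invariant multiplicity function `g` on ordered pairs of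
vertices; the C-edge which is the diameter `{a,ā}` has multiplicity `g a ā`, and a
C-edge which is a pair of centrally symmetric non-diameter edges has multiplicity the
common value of `g` on its two constituent edges.  Whenever two C-edges cross (i.e. some
constituent edge of one crosses some constituent edge of the other), one of them has
multiplicity `0`; this is equivalent to the support of `g` being pairwise noncrossing. -/
def IsCMulti (n : ℕ) (g : ZMod (2*n) → ZMod (2*n) → ℕ) : Prop :=
  (∀ i j, g i j = g j i) ∧ (∀ i, g i i = 0) ∧
  (∀ i j, g (i + (n : ZMod (2*n))) (j + (n : ZMod (2*n))) = g i j) ∧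
  (∀ i j a b, crossE i j a b → g i j = 0 ∨ g a b = 0)

/-- Twice the number of C-edges of the C-multidissection `g`, counted with multiplicity
(each diameter and each centrally symmetric pair of non-diameter edges counting once):
this equals the sum of `g` over diameters plus the sum of `g` over all edges. -/
def cEdges2 (n : ℕ) (g : ZMod (2*n) → ZMod (2*n) → ℕ) : ℕ :=
  (∑ a ∈ Finset.range n, g (a : ZMod (2*n)) ((a : ZMod (2*n)) + (n : ZMod (2*n)))) +
  ∑ i ∈ Finset.range (2*n), ∑ j ∈ Finset.range (2*n),
    if i < j then g (i : ZMod (2*n)) (j : ZMod (2*n)) else 0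

/-- The cluster variable `z_e^C` attached to a C-edge of `P_{2n}` and, by taking
products, the cluster monomial `z_g^C` attached to a C-multidissection `g`.  Vertices
`1,…,n,1̄,…,n̄` of `P_{2n}` are encoded in `ZMod (2n)` by `a ↦ a−1`, `ā ↦ a−1+n`; the
variables `x_{a1}, x_{a2}` (for `1 ≤ a ≤ n`) are indexed by `ZMod n × Fin 2` via
`x_{a,c} = X (a−1, c−1)`.  For the diameter `{a,ā}` the variable is `x_{a1}x_{a2}`;
for the segregated pair `{a,b}, {ā,b̄}` (with `a<b`) it is
`(x_{a1}x_{b2} − x_{a2}x_{b1})/(2i)`; for the integrated pair `{a,b̄}, {ā,b}` (with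
`a<b`) it is `(x_{a1}x_{b2} + x_{a2}x_{b1})/2`. -/
noncomputable def zC (n : ℕ) (g : ZMod (2*n) → ZMod (2*n) → ℕ) :
    MvPolynomial (ZMod n × Fin 2) ℂ :=
  (∏ a ∈ Finset.range n,
      (MvPolynomial.X ((a : ZMod n), 0) * MvPolynomial.X ((a : ZMod n), 1)) ^
        g (a : ZMod (2*n)) ((a : ZMod (2*n)) + (n : ZMod (2*n)))) *
  ∏ a ∈ Finset.range n, ∏ b ∈ Finset.range n,
    if a < b then
      (MvPolynomial.C ((2 * Complex.I)⁻¹) *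
          (MvPolynomial.X ((a : ZMod n), 0) * MvPolynomial.X ((b : ZMod n), 1) -
           MvPolynomial.X ((a : ZMod n), 1) * MvPolynomial.X ((b : ZMod n), 0))) ^
        g (a : ZMod (2*n)) (b : ZMod (2*n)) *
      (MvPolynomial.C ((2 : ℂ)⁻¹) *
          (MvPolynomial.X ((a : ZMod n), 0) * MvPolynomial.X ((b : ZMod n), 1) +
           MvPolynomial.X ((a : ZMod n), 1) * MvPolynomial.X ((b : ZMod n), 0))) ^
        g (a : ZMod (2*n)) ((b : ZMod (2*n)) + (n : ZMod (2*n)))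
    else 1

/-- The weight function on the variables `x = (x_{ij})` recording the degree in the
`c`-th column of variables. -/
def colWt (n : ℕ) (c : Fin 2) : ZMod n × Fin 2 → ℕ := fun p => if p.2 = c then 1 else 0

section CMultidissections

/-! ### Arcs and determinants -/

/-- The length of the clockwise arc from `a` to `b` on the `n`-cycle, a number in `[1, n]`
when `a, b < n`; the arc from `a` to itself goes once around. -/
def arcLen (n a b : ℕ) : ℕ := if a < b then b - a else b + n - a

/-- The arc (start, end) on `{0, …, n-1}` encoding the C-edge of the chord `{i, j}`, where `i ≠ j` and
`i, j < 2n`. If `i` and `j` lie in the same half `[0, n)` or `[n, 2n)`, it runs from the smaller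
residue mod `n` to the larger one, and otherwise from the larger to the smaller. -/
def arcOf (n i j : ℕ) : ℕ × ℕ :=
  if (i < n ↔ j < n) then (min (i % n) (j % n), max (i % n) (j % n))
  else (max (i % n) (j % n), min (i % n) (j % n))

/-- The multiplicity of the C-edge encoded by the arc from `a` to `b`. For `b ≤ a` the arc passes
through `0`, and it lifts to the chord from `a` to `b + n`. -/
def arcMult (n : ℕ) (g : ZMod (2*n) → ZMod (2*n) → ℕ) (a b : ℕ) : ℕ :=
  if a < b then g (a : ZMod (2*n)) (b : ZMod (2*n))
  else g (a : ZMod (2*n)) ((b : ZMod (2*n)) + (n : ZMod (2*n)))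

/-- First coordinate of the vector at vertex `i < 2n`; passing to the antipode is the
rotation `(x₁, x₂) ↦ (-i x₁, i x₂)`. -/
noncomputable def vecFst (n i : ℕ) : MvPolynomial (ZMod n × Fin 2) ℂ :=
  if i < n then MvPolynomial.X ((i : ZMod n), 0)
  else MvPolynomial.C (-Complex.I) * MvPolynomial.X ((i : ZMod n), 0)

/-- Second coordinate of the vector at vertex `i < 2n`. -/
noncomputable def vecSnd (n i : ℕ) : MvPolynomial (ZMod n × Fin 2) ℂ :=
  if i < n then MvPolynomial.X ((i : ZMod n), 1)
  else MvPolynomial.C Complex.I * MvPolynomial.X ((i : ZMod n), 1)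

/-- The normalized determinant of the vectors at the vertices `i` and `j`. For `i < j < 2n` it is
the variable attached to the C-edge of the chord `{i, j}`. -/
noncomputable def chordDet (n i j : ℕ) : MvPolynomial (ZMod n × Fin 2) ℂ :=
  MvPolynomial.C ((2 * Complex.I)⁻¹) * (vecFst n i * vecSnd n j - vecSnd n i * vecFst n j)

/-- The variable attached to the C-edge encoded by the arc `p`. -/
noncomputable def arcVar (n : ℕ) (p : ℕ × ℕ) : MvPolynomial (ZMod n × Fin 2) ℂ :=
  if p.1 < p.2 then chordDet n p.1 p.2 else chordDet n p.1 (p.2 + n)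

lemma ptolemy (n i j k l : ℕ) :
    chordDet n i k * chordDet n j l =
      chordDet n i j * chordDet n k l + chordDet n i l * chordDet n j k := by
  unfold chordDet; ring

lemma C_I_mul {σ : Type*} : (MvPolynomial.C Complex.I * MvPolynomial.C Complex.I :
    MvPolynomial σ ℂ) = -1 := by
  rw [← map_mul, Complex.I_mul_I]; simp

lemma C_inv_I {σ : Type*} : (MvPolynomial.C ((2 * Complex.I)⁻¹) * MvPolynomial.C Complex.I :
    MvPolynomial σ ℂ) = MvPolynomial.C (2⁻¹) := by
  rw [← map_mul]; congr 1; field_simp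

lemma chordDet_low {n a b : ℕ} (ha : a < n) (hb : b < n) :
    chordDet n a b = MvPolynomial.C ((2 * Complex.I)⁻¹) *
          (MvPolynomial.X ((a : ZMod n), 0) * MvPolynomial.X ((b : ZMod n), 1) -
           MvPolynomial.X ((a : ZMod n), 1) * MvPolynomial.X ((b : ZMod n), 0)) := by
  simp [chordDet, vecFst, vecSnd, ha, hb]

lemma chordDet_mixed {n a b : ℕ} (ha : a < n) :
    chordDet n a (b + n) = MvPolynomial.C ((2 : ℂ)⁻¹) *
          (MvPolynomial.X ((a : ZMod n), 0) * MvPolynomial.X ((b : ZMod n), 1) +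
           MvPolynomial.X ((a : ZMod n), 1) * MvPolynomial.X ((b : ZMod n), 0)) := by
  simp only [chordDet, vecFst, vecSnd, ha, if_true, Nat.not_lt.2 (Nat.le_add_left n b), if_false,
    Nat.cast_add, CharP.cast_eq_zero, add_zero, map_neg]
  rw [← C_inv_I]; ring

lemma chordDet_mixed_comm {n a b : ℕ} (ha : a < n) (hb : b < n) :
    chordDet n a (b + n) = chordDet n b (a + n) := by
  rw [chordDet_mixed ha, chordDet_mixed hb]; ring

lemma chordDet_high {n a b : ℕ} (ha : a < n) (hb : b < n) :
    chordDet n (a + n) (b + n) = chordDet n a b := by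
  rw [chordDet_low ha hb]
  simp only [chordDet, vecFst, vecSnd, Nat.not_lt.2 (Nat.le_add_left n _), if_false,
    Nat.cast_add, CharP.cast_eq_zero, add_zero, map_neg]
  linear_combination (-(MvPolynomial.C (2 * Complex.I)⁻¹ *
    (MvPolynomial.X ((a : ZMod n), 0) * MvPolynomial.X ((b : ZMod n), 1) -
           MvPolynomial.X ((a : ZMod n), 1) * MvPolynomial.X ((b : ZMod n), 0)))) *
    (C_I_mul (σ := ZMod n × Fin 2))

lemma chordDet_diag {n a : ℕ} (ha : a < n) :
    chordDet n a (a + n) = MvPolynomial.X ((a : ZMod n), 0) * MvPolynomial.X ((a : ZMod n), 1) := by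
  rw [chordDet_mixed ha]
  have : (MvPolynomial.C (2⁻¹ : ℂ) * 2 : MvPolynomial (ZMod n × Fin 2) ℂ) = 1 := by
    rw [show (2 : MvPolynomial (ZMod n × Fin 2) ℂ) = MvPolynomial.C 2 from (map_ofNat MvPolynomial.C 2).symm,
      ← map_mul]
    simp
  linear_combination (MvPolynomial.X ((a : ZMod n), 0) * MvPolynomial.X ((a : ZMod n), 1)) * this

/-- Case distinction on the two halves of the polygon containing the vertices `i < j`. -/
lemma chord_cases {n i j : ℕ} (hij : i < j) (hj : j < 2 * n) :
    j < n ∨ (∃ b, j = b + n ∧ i < n ∧ b < n) ∨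
      (∃ a b, i = a + n ∧ j = b + n ∧ a < b ∧ b < n) := by
  by_cases h1 : j < n
  · exact Or.inl h1
  · by_cases h2 : i < n
    · exact Or.inr (Or.inl ⟨j - n, by omega, h2, by omega⟩)
    · exact Or.inr (Or.inr ⟨i - n, j - n, by omega, by omega, by omega, by omega⟩)

lemma arcOf_low {n a b : ℕ} (hab : a < b) (hb : b < n) : arcOf n a b = (a, b) := by
  have ha : a < n := by omega
  simp [arcOf, ha, hb, Nat.mod_eq_of_lt, hab.le]

lemma arcOf_mixed {n a b : ℕ} (ha : a < n) (hb : b < n) :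
    arcOf n a (b + n) = (max a b, min a b) := by
  simp [arcOf, ha, hb, Nat.mod_eq_of_lt]

lemma arcOf_high {n a b : ℕ} (hab : a < b) (hb : b < n) : arcOf n (a + n) (b + n) = (a, b) := by
  have ha : a < n := by omega
  simp [arcOf, ha, hb, Nat.mod_eq_of_lt, hab.le]

lemma arcOf_comm (n i j : ℕ) : arcOf n i j = arcOf n j i := by
  rw [arcOf, arcOf, min_comm, max_comm]
  simp only [iff_comm]

lemma arcOf_lt {n i j : ℕ} (hn : 0 < n) : (arcOf n i j).1 < n ∧ (arcOf n i j).2 < n := by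
  have h1 := Nat.mod_lt i hn
  have h2 := Nat.mod_lt j hn
  unfold arcOf
  split_ifs <;> simp [h1, h2]

lemma arcVar_arcOf {n i j : ℕ} (hij : i < j) (hj : j < 2 * n) :
    arcVar n (arcOf n i j) = chordDet n i j := by
  rcases chord_cases hij hj with h | ⟨b, rfl, hi, hb⟩ | ⟨a, b, rfl, rfl, hab, hb⟩
  · rw [arcOf_low hij h]; simp [arcVar, hij]
  · rw [arcOf_mixed hi hb]
    have : ¬ max i b < min i b := by omega
    simp only [arcVar, this, if_false]
    rcases le_total i b with h | h
    · simp only [max_eq_right h, min_eq_left h, chordDet_mixed_comm hb hi]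
    · simp only [max_eq_left h, min_eq_right h]
  · rw [arcOf_high hab hb, chordDet_high (by omega) hb]; simp [arcVar, hab]

/-! ### The weight of an arc -/

/-- The weight `ℓ(2n - ℓ)` of an arc of length `ℓ`. It strictly decreases under the Ptolemy
relation. -/
def arcWt (n : ℕ) (p : ℕ × ℕ) : ℕ := arcLen n p.1 p.2 * (2 * n - arcLen n p.1 p.2)

lemma arcWt_arcOf {n i j : ℕ} (hij : i < j) (hj : j < 2 * n) :
    arcWt n (arcOf n i j) = (j - i) * (2 * n - (j - i)) := by
  rcases chord_cases hij hj with h | ⟨b, rfl, hi, hb⟩ | ⟨a, b, rfl, rfl, hab, hb⟩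
  · rw [arcOf_low hij h]; simp [arcWt, arcLen, hij]
  · rw [arcOf_mixed hi hb]
    have : ¬ max i b < min i b := by omega
    simp only [arcWt, arcLen, this, if_false]
    rcases le_total i b with h | h
    · rw [max_eq_right h, min_eq_left h, mul_comm]
      congr 1 <;> omega
    · rw [max_eq_left h, min_eq_right h]
  · rw [arcOf_high hab hb]
    simp [arcWt, arcLen, hab, Nat.add_sub_add_right]

/-- Both terms on the right of the Ptolemy relation have smaller weight than the left-hand side: the
differences are twice the products of the lengths of opposite sides of the quadrilateral. -/
lemma arcWt_ptolemy {n p q r s : ℕ} (h1 : p < q) (h2 : q < r) (h3 : r < s) (h4 : s < 2 * n) :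
    arcWt n (arcOf n p q) + arcWt n (arcOf n r s) <
      arcWt n (arcOf n p r) + arcWt n (arcOf n q s) ∧
    arcWt n (arcOf n p s) + arcWt n (arcOf n q r) <
      arcWt n (arcOf n p r) + arcWt n (arcOf n q s) := by
  rw [arcWt_arcOf, arcWt_arcOf, arcWt_arcOf, arcWt_arcOf, arcWt_arcOf, arcWt_arcOf] <;> try omega
  -- the sides `pq`, `qr`, `rs` have lengths `x + 1`, `y + 1`, `z + 1`, and the fourth side has
  -- length `p + t + 1`
  obtain ⟨x, rfl⟩ := Nat.exists_eq_add_of_lt h1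
  obtain ⟨y, rfl⟩ := Nat.exists_eq_add_of_lt h2
  obtain ⟨z, rfl⟩ := Nat.exists_eq_add_of_lt h3
  obtain ⟨t, ht⟩ := Nat.exists_eq_add_of_lt h4
  rw [ht]
  have e1 : p + x + 1 - p = x + 1 := by omega
  have e2 : p + x + 1 + y + 1 + z + 1 - (p + x + 1 + y + 1) = z + 1 := by omega
  have e3 : p + x + 1 + y + 1 - p = x + y + 2 := by omega
  have e4 : p + x + 1 + y + 1 + z + 1 - (p + x + 1) = y + z + 2 := by omega
  have e5 : p + x + 1 + y + 1 + z + 1 - p = x + y + z + 3 := by omega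
  have e6 : p + x + 1 + y + 1 - (p + x + 1) = y + 1 := by omega
  rw [e1, e2, e3, e4, e5, e6]
  have f1 : p + x + 1 + y + 1 + z + 1 + t + 1 - (x + 1) = p + y + z + t + 3 := by omega
  have f2 : p + x + 1 + y + 1 + z + 1 + t + 1 - (z + 1) = p + x + y + t + 3 := by omega
  have f3 : p + x + 1 + y + 1 + z + 1 + t + 1 - (x + y + 2) = p + z + t + 2 := by omega
  have f4 : p + x + 1 + y + 1 + z + 1 + t + 1 - (y + z + 2) = p + x + t + 2 := by omega
  have f5 : p + x + 1 + y + 1 + z + 1 + t + 1 - (x + y + z + 3) = p + t + 1 := by omega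
  have f6 : p + x + 1 + y + 1 + z + 1 + t + 1 - (y + 1) = p + x + z + t + 3 := by omega
  rw [f1, f2, f3, f4, f5, f6]
  have key : ∀ u v d : ℕ, 0 < d → v = u + d → u < v := by omega
  exact ⟨key _ _ (2 * ((y + 1) * (p + t + 1))) (by positivity) (by ring),
    key _ _ (2 * ((x + 1) * (z + 1))) (by positivity) (by ring)⟩

/-- A chord crosses neither itself nor its antipode. -/
lemma arcOf_ne_of_cross {n p q r s : ℕ} (h1 : p < q) (h2 : q < r) (h3 : r < s) (h4 : s < 2 * n) :
    arcOf n p r ≠ arcOf n q s := by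
  intro h
  rcases chord_cases (h1.trans h2) (h3.trans h4) with
    h5 | ⟨b, rfl, hi, hb⟩ | ⟨a, b, rfl, rfl, hab, hb⟩ <;>
  rcases chord_cases (h2.trans h3) h4 with
    h5' | ⟨b', rfl, hi', hb'⟩ | ⟨a', b', rfl, rfl, hab', hb'⟩ <;>
  (try rw [arcOf_low (h1.trans h2) h5] at h) <;> (try rw [arcOf_mixed hi hb] at h) <;>
  (try rw [arcOf_high hab hb] at h) <;>
  (try rw [arcOf_low (h2.trans h3) h5'] at h) <;> (try rw [arcOf_mixed hi' hb'] at h) <;>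
  (try rw [arcOf_high hab' hb'] at h) <;>
  simp only [Prod.mk.injEq] at h <;> omega

/-! ### C-multidissections and their margins -/

lemma IsCMulti.mixed_comm {n : ℕ} {g : ZMod (2*n) → ZMod (2*n) → ℕ} (hg : IsCMulti n g) (a b : ℕ) :
    g (a : ZMod (2*n)) ((b : ZMod (2*n)) + (n : ZMod (2*n))) =
      g (b : ZMod (2*n)) ((a : ZMod (2*n)) + (n : ZMod (2*n))) := by
  have h2 : ((n : ZMod (2*n)) + (n : ZMod (2*n))) = 0 := by
    rw [← two_mul]; exact_mod_cast ZMod.natCast_self (2*n)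
  rw [hg.1 (b : ZMod (2*n)), ← hg.2.2.1 _ (b : ZMod (2*n)), add_assoc, h2, add_zero]

/-- A C-multidissection is determined by the multiplicities of the arcs. -/
lemma IsCMulti.eq_arcMult {n : ℕ} {g : ZMod (2*n) → ZMod (2*n) → ℕ} (hg : IsCMulti n g)
    {i j : ℕ} (hij : i < j) (hj : j < 2 * n) :
    g (i : ZMod (2*n)) (j : ZMod (2*n)) = arcMult n g (arcOf n i j).1 (arcOf n i j).2 := by
  rcases chord_cases hij hj with h | ⟨b, rfl, hi, hb⟩ | ⟨a, b, rfl, rfl, hab, hb⟩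
  · rw [arcOf_low hij h]; simp [arcMult, hij]
  · rw [arcOf_mixed hi hb]
    have : ¬ max i b < min i b := by omega
    simp only [arcMult, this, if_false]
    rcases le_total i b with h | h
    · rw [max_eq_right h, min_eq_left h, hg.mixed_comm]; push_cast; rfl
    · rw [max_eq_left h, min_eq_right h]; push_cast; rfl
  · rw [arcOf_high hab hb]
    simp only [arcMult, hab, if_true, Nat.cast_add]
    exact hg.2.2.1 _ _

lemma exists_natCast {n : ℕ} (hn : 0 < n) (x : ZMod (2*n)) :
    ∃ i < 2 * n, x = (i : ZMod (2*n)) ∧ x.val = i := by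
  have : NeZero (2*n) := ⟨by omega⟩
  exact ⟨x.val, x.val_lt, by simp, rfl⟩

lemma IsCMulti.ext {n : ℕ} (hn : 0 < n) {g h : ZMod (2*n) → ZMod (2*n) → ℕ} (hg : IsCMulti n g)
    (hh : IsCMulti n h) (H : ∀ a < n, ∀ b < n, arcMult n g a b = arcMult n h a b) : g = h := by
  have key : ∀ i j : ℕ, i < j → j < 2 * n →
      g (i : ZMod (2*n)) (j : ZMod (2*n)) = h (i : ZMod (2*n)) (j : ZMod (2*n)) := by
    intro i j hij hj
    rw [hg.eq_arcMult hij hj, hh.eq_arcMult hij hj]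
    exact H _ (arcOf_lt hn).1 _ (arcOf_lt hn).2
  funext x y
  obtain ⟨i, hi, rfl, -⟩ := exists_natCast hn x
  obtain ⟨j, hj, rfl, -⟩ := exists_natCast hn y
  rcases lt_trichotomy i j with h1 | rfl | h1
  · exact key i j h1 hj
  · rw [hg.2.1, hh.2.1]
  · rw [hg.1, hh.1]; exact key j i h1 hi

lemma IsCMulti.cross {n : ℕ} {g : ZMod (2*n) → ZMod (2*n) → ℕ} (hg : IsCMulti n g)
    {p q r s : ℕ} (h1 : p < q) (h2 : q < r) (h3 : r < s) (h4 : s < 2 * n) :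
    arcMult n g (arcOf n p r).1 (arcOf n p r).2 = 0 ∨
      arcMult n g (arcOf n q s).1 (arcOf n q s).2 = 0 := by
  rw [← hg.eq_arcMult (h1.trans h2) (h3.trans h4), ← hg.eq_arcMult (h2.trans h3) h4]
  apply hg.2.2.2
  left
  rw [ZMod.val_natCast_of_lt (by omega), ZMod.val_natCast_of_lt (by omega),
    ZMod.val_natCast_of_lt (by omega), ZMod.val_natCast_of_lt (by omega)]
  omega

/-- Two arcs strictly longer than the one from `a` to `b`, the first also starting at `a` and the
second also ending at `b`, have crossing C-edges. -/
lemma IsCMulti.arc_cross {n : ℕ} {g : ZMod (2*n) → ZMod (2*n) → ℕ} (hg : IsCMulti n g)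
    {a b c d : ℕ} (ha : a < n) (hb : b < n) (hc : c < n) (hd : d < n)
    (h1 : arcLen n a b < arcLen n a c) (h2 : arcLen n a b < arcLen n d b) :
    arcMult n g a c = 0 ∨ arcMult n g d b = 0 := by
  -- the clockwise endpoints `B` and `C` of the arcs starting at `a`, in `(a, a + n]`
  obtain ⟨B, hB⟩ : ∃ B, B = if a < b then b else b + n := ⟨_, rfl⟩
  obtain ⟨C, hC⟩ : ∃ C, C = if a < c then c else c + n := ⟨_, rfl⟩
  have haC : arcOf n a C = (a, c) := by
    rw [hC]; split_ifs with h
    · exact arcOf_low h hc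
    · rw [arcOf_mixed ha hc, max_eq_left (by omega), min_eq_right (by omega)]
  have hor : (d < a ∧ arcOf n d B = (d, b)) ∨ (a < d ∧ arcOf n B (d + n) = (d, b)) := by
    rw [hB]
    unfold arcLen at h1 h2
    -- the lift of `d` preceding `a` is `d` or `d - n`; the latter is negative and is replaced by
    -- `d + n`, the same vertex of the `2n`-gon, which comes after `C`
    rcases lt_trichotomy d a with h | rfl | h
    · refine Or.inl ⟨h, ?_⟩
      split_ifs at * with h' <;> first
        | omega
        | exact arcOf_low (by omega) hb
        | rw [arcOf_mixed hd hb, max_eq_left (by omega), min_eq_right (by omega)]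
    · omega
    · refine Or.inr ⟨h, ?_⟩
      split_ifs at * with h' <;> try omega
      all_goals rw [arcOf_mixed hb hd, max_eq_right (by omega), min_eq_left (by omega)]
  have hlt : a < B ∧ B < C ∧ C ≤ a + n := by
    unfold arcLen at h1
    split_ifs at * <;> omega
  rcases hor with ⟨h, e⟩ | ⟨h, e⟩
  · have := hg.cross h hlt.1 hlt.2.1 (by omega)
    rw [haC, e] at this
    exact this.symm
  · have := hg.cross hlt.1 hlt.2.1 (show C < d + n by omega) (by omega)
    rw [haC, e] at this
    exact this

/-- The minimality step: two C-multidissections with the same numbers of arcs starting at each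
vertex and ending at each vertex have the same number of arcs from `a` to `b`, if they agree on
all shorter arcs. -/
lemma IsCMulti.arcMult_not_lt {n : ℕ} {g h : ZMod (2*n) → ZMod (2*n) → ℕ}
    (hh : IsCMulti n h)
    (hs : ∀ a < n, ∑ b ∈ range n, arcMult n g a b = ∑ b ∈ range n, arcMult n h a b)
    (ht : ∀ b < n, ∑ a ∈ range n, arcMult n g a b = ∑ a ∈ range n, arcMult n h a b)
    {a b : ℕ} (ha : a < n) (hb : b < n)
    (ih : ∀ a' < n, ∀ b' < n, arcLen n a' b' < arcLen n a b →
      arcMult n g a' b' = arcMult n h a' b') :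
    ¬ arcMult n h a b < arcMult n g a b := by
  intro hlt
  have h1 : ∃ c < n, arcMult n g a c < arcMult n h a c := by
    by_contra! hcon
    exact absurd (hs a ha) (Finset.sum_lt_sum (fun c hc => hcon c (mem_range.1 hc))
      ⟨b, mem_range.2 hb, hlt⟩).ne'
  have h2 : ∃ d < n, arcMult n g d b < arcMult n h d b := by
    by_contra! hcon
    exact absurd (ht b hb) (Finset.sum_lt_sum (fun c hc => hcon c (mem_range.1 hc))
      ⟨a, mem_range.2 ha, hlt⟩).ne'
  obtain ⟨c, hc, h1⟩ := h1
  obtain ⟨d, hd, h2⟩ := h2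
  have l1 : arcLen n a b < arcLen n a c := by
    by_contra hle
    rcases Nat.lt_or_ge (arcLen n a c) (arcLen n a b) with h3 | h3
    · exact h1.ne (ih a ha c hc h3)
    · have : b = c := by unfold arcLen at *; split_ifs at * <;> omega
      subst this; omega
  have l2 : arcLen n a b < arcLen n d b := by
    by_contra hle
    rcases Nat.lt_or_ge (arcLen n d b) (arcLen n a b) with h3 | h3
    · exact h2.ne (ih d hd b hb h3)
    · have : a = d := by unfold arcLen at *; split_ifs at * <;> omega
      subst this; omega
  rcases hh.arc_cross ha hb hc hd l1 l2 with h3 | h3 <;> omega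

/-- A C-multidissection is determined by the numbers of arcs starting and ending at each vertex. -/
lemma IsCMulti.eq_of_margins {n : ℕ} (hn : 0 < n) {g h : ZMod (2*n) → ZMod (2*n) → ℕ}
    (hg : IsCMulti n g) (hh : IsCMulti n h)
    (hs : ∀ a < n, ∑ b ∈ range n, arcMult n g a b = ∑ b ∈ range n, arcMult n h a b)
    (ht : ∀ b < n, ∑ a ∈ range n, arcMult n g a b = ∑ a ∈ range n, arcMult n h a b) :
    g = h := by
  have key : ∀ l, ∀ a < n, ∀ b < n, arcLen n a b = l → arcMult n g a b = arcMult n h a b := by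
    intro l
    induction l using Nat.strong_induction_on with
    | _ l ih =>
      intro a ha b hb hl
      have h1 := hh.arcMult_not_lt hs ht ha hb
        (fun a' ha' b' hb' hlt => ih _ (hl ▸ hlt) a' ha' b' hb' rfl)
      have h2 := hg.arcMult_not_lt (fun a ha => (hs a ha).symm) (fun b hb => (ht b hb).symm) ha hb
        (fun a' ha' b' hb' hlt => (ih _ (hl ▸ hlt) a' ha' b' hb' rfl).symm)
      omega
  exact IsCMulti.ext hn hg hh fun a ha b hb => key _ a ha b hb rfl

/-! ### Expressing monomials and edge counts through arcs -/

@[to_additive]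
lemma prod_range_pairs {R : Type*} [CommMonoid R] (n : ℕ) (f : ℕ → ℕ → R) :
    ∏ a ∈ range n, ∏ b ∈ range n, f a b =
      (∏ a ∈ range n, f a a) *
        ∏ a ∈ range n, ∏ b ∈ range n, if a < b then f a b * f b a else 1 := by
  have e1 : ∏ a ∈ range n, ∏ b ∈ range n, f a b =
      ∏ a ∈ range n, ∏ b ∈ range n, ((if a = b then f a b else 1) *
        ((if a < b then f a b else 1) * (if b < a then f a b else 1))) := by
    refine prod_congr rfl fun a _ => prod_congr rfl fun b _ => ?_
    rcases lt_trichotomy a b with h | h | h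
    · simp [h, h.ne, h.not_gt]
    · simp [h]
    · simp [h, h.ne', h.not_gt]
  rw [e1]
  simp only [prod_mul_distrib]
  congr 1
  · refine prod_congr rfl fun a ha => ?_
    simp [Finset.prod_ite_eq, mem_range.1 ha]
  · rw [prod_comm (f := fun a b => if b < a then f a b else 1), ← prod_mul_distrib]
    refine prod_congr rfl fun a _ => ?_
    rw [← prod_mul_distrib]
    refine prod_congr rfl fun b _ => ?_
    split_ifs <;> simp

lemma IsCMulti.zC_eq {n : ℕ} {g : ZMod (2*n) → ZMod (2*n) → ℕ} (hg : IsCMulti n g) :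
    zC n g = ∏ a ∈ range n, ∏ b ∈ range n, arcVar n (a, b) ^ arcMult n g a b := by
  rw [prod_range_pairs, zC]
  refine congrArg₂ (· * ·) ?_ ?_
  · refine prod_congr rfl fun a ha => ?_
    simp [arcVar, arcMult, chordDet_diag (mem_range.1 ha)]
  · refine prod_congr rfl fun a ha => prod_congr rfl fun b hb => ?_
    rw [mem_range] at ha hb
    split_ifs with h
    · simp only [arcVar, arcMult, h, if_true, h.not_gt, if_false]
      rw [chordDet_low ha hb, chordDet_mixed_comm hb ha, chordDet_mixed ha, hg.mixed_comm]
    · rfl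

lemma IsCMulti.cEdges2_eq {n : ℕ} {g : ZMod (2*n) → ZMod (2*n) → ℕ} (hg : IsCMulti n g) :
    cEdges2 n g = 2 * ∑ a ∈ range n, ∑ b ∈ range n, arcMult n g a b := by
  have hlow : ∀ i ∈ range n, ∀ j ∈ range n,
      (if i < n + j then g (i : ZMod (2*n)) ((n + j : ℕ) : ZMod (2*n)) else 0) =
        g (i : ZMod (2*n)) ((j : ZMod (2*n)) + (n : ZMod (2*n))) := by
    intro i hi j hj
    rw [mem_range] at hi hj
    rw [if_pos (by omega)]; push_cast; rw [add_comm (n : ZMod (2*n))]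
  have hzero : ∀ i ∈ range n, ∀ j ∈ range n,
      (if n + i < j then g ((n + i : ℕ) : ZMod (2*n)) (j : ZMod (2*n)) else 0) = 0 := by
    intro i hi j hj
    rw [mem_range] at hi hj
    rw [if_neg (by omega)]
  have hhigh : ∀ i ∈ range n, ∀ j ∈ range n,
      (if n + i < n + j then g ((n + i : ℕ) : ZMod (2*n)) ((n + j : ℕ) : ZMod (2*n)) else 0) =
      (if i < j then g (i : ZMod (2*n)) (j : ZMod (2*n)) else 0) := by
    intro i hi j hj
    simp only [Nat.add_lt_add_iff_left, Nat.cast_add, add_comm (n : ZMod (2*n)), hg.2.2.1]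
  have hN : ∀ f : ℕ → ℕ, ∑ i ∈ range (2 * n), f i =
      ∑ i ∈ range n, f i + ∑ i ∈ range n, f (n + i) := by
    intro f; rw [two_mul, Finset.sum_range_add]
  rw [cEdges2, hN]
  simp only [hN]
  rw [sum_congr rfl fun i hi => congrArg₂ (· + ·) rfl (sum_congr rfl (hlow i hi)),
    sum_congr (s₁ := range n) (s₂ := range n) rfl fun i hi =>
      congrArg₂ (· + ·) (sum_congr rfl (hzero i hi)) (sum_congr rfl (hhigh i hi))]
  simp only [sum_add_distrib, sum_const_zero, zero_add]
  rw [sum_range_pairs n (arcMult n g), sum_range_pairs n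
    (fun i j => g (i : ZMod (2*n)) ((j : ZMod (2*n)) + (n : ZMod (2*n))))]
  have hd : ∀ a : ℕ, arcMult n g a a = g (a : ZMod (2*n)) ((a : ZMod (2*n)) + (n : ZMod (2*n))) := by
    intro a; simp [arcMult]
  have hp : ∀ a b : ℕ, (if a < b then arcMult n g a b + arcMult n g b a else 0) =
      (if a < b then g (a : ZMod (2*n)) (b : ZMod (2*n)) else 0) +
      (if a < b then g (a : ZMod (2*n)) ((b : ZMod (2*n)) + (n : ZMod (2*n))) else 0) := by
    intro a b
    split_ifs with h
    · simp [arcMult, h, h.not_gt, hg.mixed_comm b a]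
    · rfl
  have hq : ∀ a b : ℕ, (if a < b then
        g (a : ZMod (2*n)) ((b : ZMod (2*n)) + (n : ZMod (2*n))) +
        g (b : ZMod (2*n)) ((a : ZMod (2*n)) + (n : ZMod (2*n))) else 0) =
      (if a < b then g (a : ZMod (2*n)) ((b : ZMod (2*n)) + (n : ZMod (2*n))) else 0) +
      (if a < b then g (a : ZMod (2*n)) ((b : ZMod (2*n)) + (n : ZMod (2*n))) else 0) := by
    intro a b
    split_ifs with h
    · simp [hg.mixed_comm b a]
    · rfl
  simp only [hd, hp, hq, sum_add_distrib]
  ring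

/-! ### Spanning: straightening by the Ptolemy relation -/

/-- The multiplicity function on chords in which each C-edge occurs as often as its arc in `M`. -/
def ofArcs (n : ℕ) (M : Multiset (ℕ × ℕ)) : ZMod (2*n) → ZMod (2*n) → ℕ :=
  fun x y => if x = y then 0 else M.count (arcOf n x.val y.val)

lemma natCast_inj_of_lt {m i j : ℕ} (hi : i < m) (hj : j < m) :
    (i : ZMod m) = (j : ZMod m) ↔ i = j := by
  constructor
  · intro h
    have := congrArg ZMod.val h
    rwa [ZMod.val_natCast_of_lt hi, ZMod.val_natCast_of_lt hj] at this
  · rintro rfl; rfl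

lemma ofArcs_natCast {n : ℕ} (M : Multiset (ℕ × ℕ)) {i j : ℕ} (hi : i < 2 * n) (hj : j < 2 * n)
    (hij : i ≠ j) : ofArcs n M (i : ZMod (2*n)) (j : ZMod (2*n)) = M.count (arcOf n i j) := by
  rw [ofArcs, if_neg (by rwa [natCast_inj_of_lt hi hj]), ZMod.val_natCast_of_lt hi,
    ZMod.val_natCast_of_lt hj]

lemma arcMult_ofArcs {n : ℕ} (M : Multiset (ℕ × ℕ)) {a b : ℕ} (ha : a < n) (hb : b < n) :
    arcMult n (ofArcs n M) a b = M.count (a, b) := by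
  unfold arcMult
  split_ifs with h
  · rw [ofArcs_natCast M (by omega) (by omega) h.ne, arcOf_low h hb]
  · have := ofArcs_natCast M (i := a) (j := b + n) (n := n) (by omega) (by omega) (by omega)
    rw [Nat.cast_add] at this
    rw [this, arcOf_mixed ha hb, max_eq_left (by omega), min_eq_right (by omega)]

lemma val_antipode {n i : ℕ} (hi : i < 2 * n) :
    ((i : ZMod (2*n)) + (n : ZMod (2*n))).val = if i < n then i + n else i - n := by
  split_ifs with h
  · rw [← Nat.cast_add, ZMod.val_natCast_of_lt (by omega)]
  · rw [← Nat.cast_add, ZMod.val_natCast, Nat.mod_eq_sub_mod (by omega), Nat.mod_eq_of_lt (by omega)]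
    omega

lemma arcOf_antipode {n i j : ℕ} (hi : i < 2 * n) (hj : j < 2 * n) :
    arcOf n (if i < n then i + n else i - n) (if j < n then j + n else j - n) = arcOf n i j := by
  have key : ∀ i < 2 * n, (if i < n then i + n else i - n) % n = i % n ∧
      ((if i < n then i + n else i - n) < n ↔ ¬ i < n) := by
    intro i hi
    split_ifs with h
    · simp [h]
    · refine ⟨?_, by omega⟩
      rw [Nat.mod_eq_sub_mod (a := i) (by omega)]
  unfold arcOf
  rw [(key i hi).1, (key j hj).1]
  simp only [(key i hi).2, (key j hj).2, not_iff_not]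

lemma isCMulti_ofArcs {n : ℕ} (hn : 0 < n) (M : Multiset (ℕ × ℕ))
    (hM : ∀ p q r s, p < q → q < r → r < s → s < 2 * n →
      arcOf n p r ∉ M ∨ arcOf n q s ∉ M) : IsCMulti n (ofArcs n M) := by
  refine ⟨fun x y => ?_, fun x => by simp [ofArcs], fun x y => ?_, fun x y z w => ?_⟩
  · simp only [ofArcs, eq_comm (a := x), arcOf_comm n x.val]
  · obtain ⟨i, hi, rfl, hi'⟩ := exists_natCast hn x
    obtain ⟨j, hj, rfl, hj'⟩ := exists_natCast hn y
    simp only [ofArcs, add_left_inj, val_antipode hi, val_antipode hj, arcOf_antipode hi hj, hi', hj']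
  · have main : ∀ x y z w : ZMod (2*n), min x.val y.val < min z.val w.val →
        min z.val w.val < max x.val y.val → max x.val y.val < max z.val w.val →
        ofArcs n M x y = 0 ∨ ofArcs n M z w = 0 := by
      intro x y z w h1 h2 h3
      have : NeZero (2*n) := ⟨by omega⟩
      have hlt : max z.val w.val < 2 * n := max_lt z.val_lt w.val_lt
      have hsort : ∀ u v : ZMod (2*n), arcOf n (min u.val v.val) (max u.val v.val) ∉ M →
          ofArcs n M u v = 0 := by
        intro u v h
        unfold ofArcs
        split_ifs
        · rfl
        · rw [Multiset.count_eq_zero]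
          rcases le_total u.val v.val with h' | h'
          · rwa [min_eq_left h', max_eq_right h'] at h
          · rwa [min_eq_right h', max_eq_left h', arcOf_comm] at h
      exact (hM _ _ _ _ h1 h2 h3 hlt).imp (hsort x y) (hsort z w)
    rintro (⟨h1, h2, h3⟩ | ⟨h1, h2, h3⟩)
    · exact main x y z w h1 h2 h3
    · exact (main z w x y h1 h2 h3).symm

lemma zC_ofArcs {n : ℕ} {M : Multiset (ℕ × ℕ)} (hM : ∀ p ∈ M, p.1 < n ∧ p.2 < n)
    (h : IsCMulti n (ofArcs n M)) : zC n (ofArcs n M) = (M.map (arcVar n)).prod := by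
  rw [h.zC_eq, Finset.prod_multiset_map_count,
    Finset.prod_subset (s₂ := range n ×ˢ range n), prod_product]
  · refine prod_congr rfl fun a ha => prod_congr rfl fun b hb => ?_
    rw [arcMult_ofArcs M (mem_range.1 ha) (mem_range.1 hb)]
  · intro p hp
    simpa using hM p (Multiset.mem_toFinset.1 hp)
  · intro p _ hp
    rw [Multiset.mem_toFinset, ← Multiset.count_eq_zero] at hp
    rw [hp, pow_zero]

lemma cEdges2_ofArcs {n : ℕ} {M : Multiset (ℕ × ℕ)} (hM : ∀ p ∈ M, p.1 < n ∧ p.2 < n)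
    (h : IsCMulti n (ofArcs n M)) : cEdges2 n (ofArcs n M) = 2 * M.card := by
  rw [h.cEdges2_eq, ← Multiset.sum_count_eq_card (s := range n ×ˢ range n) (by simpa using hM),
    sum_product]
  congr 1
  refine sum_congr rfl fun a ha => sum_congr rfl fun b hb => ?_
  rw [arcMult_ofArcs M (mem_range.1 ha) (mem_range.1 hb)]

/-- The C-multidissections of `P_{2n}` with `k` edges. -/
abbrev CDiss (n k : ℕ) :=
  {g : ZMod (2*n) → ZMod (2*n) → ℕ // IsCMulti n g ∧ cEdges2 n g = 2 * k}

/-- Straightening: repeatedly applying the Ptolemy relation to crossing C-edges terminates, because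
it decreases the total weight. -/
lemma prod_arcVar_mem_span {n : ℕ} (hn : 0 < n) (k : ℕ) (N : ℕ) :
    ∀ M : Multiset (ℕ × ℕ), (∀ p ∈ M, p.1 < n ∧ p.2 < n) → M.card = k →
      (M.map (arcWt n)).sum = N →
      (M.map (arcVar n)).prod ∈ Submodule.span ℂ (Set.range fun g : CDiss n k => zC n g.1) := by
  induction N using Nat.strong_induction_on with
  | _ N ih =>
    intro M hM hk hN
    by_cases hc : ∀ p q r s, p < q → q < r → r < s → s < 2 * n →
      arcOf n p r ∉ M ∨ arcOf n q s ∉ M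
    · have h := isCMulti_ofArcs hn M hc
      exact Submodule.subset_span
        ⟨⟨ofArcs n M, h, by rw [cEdges2_ofArcs hM h, hk]⟩, zC_ofArcs hM h⟩
    · push Not at hc
      obtain ⟨p, q, r, s, h1, h2, h3, h4, hp, hq⟩ := hc
      obtain ⟨M₁, rfl⟩ := Multiset.exists_cons_of_mem hp
      have hq' : arcOf n q s ∈ M₁ :=
        (Multiset.mem_cons.1 hq).resolve_left (arcOf_ne_of_cross h1 h2 h3 h4).symm
      obtain ⟨M₂, rfl⟩ := Multiset.exists_cons_of_mem hq'
      have hw := arcWt_ptolemy h1 h2 h3 h4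
      have hM₂ : ∀ x ∈ M₂, x.1 < n ∧ x.2 < n := fun x hx => hM x (by simp [hx])
      have hcons : ∀ i j i' j', ∀ x ∈ arcOf n i j ::ₘ arcOf n i' j' ::ₘ M₂, x.1 < n ∧ x.2 < n := by
        intro i j i' j' x hx
        rcases Multiset.mem_cons.1 hx with rfl | hx
        · exact arcOf_lt hn
        rcases Multiset.mem_cons.1 hx with rfl | hx
        · exact arcOf_lt hn
        · exact hM₂ x hx
      simp only [Multiset.map_cons, Multiset.sum_cons, Multiset.card_cons] at hN hk
      have m1 := ih _ (by
        simp only [Multiset.map_cons, Multiset.sum_cons] at *; omega)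
        (arcOf n p q ::ₘ arcOf n r s ::ₘ M₂) (hcons _ _ _ _) (by simpa using hk) rfl
      have m2 := ih _ (by
        simp only [Multiset.map_cons, Multiset.sum_cons] at *; omega)
        (arcOf n p s ::ₘ arcOf n q r ::ₘ M₂) (hcons _ _ _ _) (by simpa using hk) rfl
      convert Submodule.add_mem _ m1 m2 using 1
      simp only [Multiset.map_cons, Multiset.prod_cons]
      rw [arcVar_arcOf (h1.trans h2) (h3.trans h4), arcVar_arcOf (h2.trans h3) h4,
        arcVar_arcOf h1 (by omega), arcVar_arcOf h3 h4, arcVar_arcOf (by omega) h4,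
        arcVar_arcOf h2 (by omega)]
      linear_combination (M₂.map (arcVar n)).prod * ptolemy n p q r s

/-- The span of all products of `k` variables attached to C-edges, crossing or not. -/
noncomputable def arcSpan (n k : ℕ) : Submodule ℂ (MvPolynomial (ZMod n × Fin 2) ℂ) :=
  Submodule.span ℂ {P | ∃ M : Multiset (ℕ × ℕ), (∀ p ∈ M, p.1 < n ∧ p.2 < n) ∧ M.card = k ∧
    (M.map (arcVar n)).prod = P}

lemma arcSpan_mul {n k : ℕ} {P : MvPolynomial (ZMod n × Fin 2) ℂ} (hP : P ∈ arcSpan n k)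
    {p : ℕ × ℕ} (hp : p.1 < n ∧ p.2 < n) : P * arcVar n p ∈ arcSpan n (k + 1) := by
  unfold arcSpan at hP
  induction hP using Submodule.span_induction with
  | mem x hx =>
    obtain ⟨M, hM, hk, rfl⟩ := hx
    refine Submodule.subset_span ⟨p ::ₘ M, ?_, by simp [hk], by simp [mul_comm]⟩
    intro q hq
    rcases Multiset.mem_cons.1 hq with rfl | hq
    exacts [hp, hM q hq]
  | zero => rw [zero_mul]; exact Submodule.zero_mem _
  | add x y _ _ hx hy => rw [add_mul]; exact Submodule.add_mem _ hx hy
  | smul c x _ hx => rw [smul_mul_assoc]; exact Submodule.smul_mem _ _ hx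

lemma X_mul_X_eq {n a b : ℕ} (ha : a < n) (hb : b < n) :
    ∃ c d : ℂ, (MvPolynomial.X ((a : ZMod n), 0) * MvPolynomial.X ((b : ZMod n), 1) :
      MvPolynomial (ZMod n × Fin 2) ℂ) = c • arcVar n (a, b) + d • arcVar n (b, a) := by
  have h2 : (MvPolynomial.C (2⁻¹ : ℂ) * 2 : MvPolynomial (ZMod n × Fin 2) ℂ) = 1 := by
    rw [← map_ofNat MvPolynomial.C 2, ← map_mul]
    simp
  have hI := C_inv_I (σ := ZMod n × Fin 2)
  rcases lt_trichotomy a b with h | rfl | h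
  · refine ⟨Complex.I, 1, ?_⟩
    simp only [arcVar, h, h.not_gt, if_true, if_false, MvPolynomial.smul_eq_C_mul]
    rw [chordDet_low ha hb, chordDet_mixed hb, map_one]
    linear_combination (-(MvPolynomial.X ((a : ZMod n), 0) * MvPolynomial.X ((b : ZMod n), 1))) * h2
      - (MvPolynomial.X ((a : ZMod n), 0) * MvPolynomial.X ((b : ZMod n), 1) -
           MvPolynomial.X ((a : ZMod n), 1) * MvPolynomial.X ((b : ZMod n), 0)) * hI
  · refine ⟨1, 0, ?_⟩
    simp [arcVar, chordDet_diag ha]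
  · refine ⟨1, -Complex.I, ?_⟩
    simp only [arcVar, h, h.not_gt, if_true, if_false, MvPolynomial.smul_eq_C_mul]
    rw [chordDet_low hb ha, chordDet_mixed ha, map_one, map_neg]
    linear_combination (-(MvPolynomial.X ((a : ZMod n), 0) * MvPolynomial.X ((b : ZMod n), 1))) * h2
      + (MvPolynomial.X ((b : ZMod n), 0) * MvPolynomial.X ((a : ZMod n), 1) -
           MvPolynomial.X ((b : ZMod n), 1) * MvPolynomial.X ((a : ZMod n), 0)) * hI

lemma exists_ne_zero_of_weight {n k : ℕ} {c : Fin 2} {d : ZMod n × Fin 2 →₀ ℕ}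
    (h : Finsupp.weight (colWt n c) d = k + 1) : ∃ a : ZMod n, 1 ≤ d (a, c) := by
  by_contra! hcon
  have : Finsupp.weight (colWt n c) d = 0 := by
    rw [Finsupp.weight_apply, Finsupp.sum]
    refine sum_eq_zero fun p _ => ?_
    obtain ⟨a, e⟩ := p
    by_cases he : e = c
    · subst he
      have := hcon a
      simp [show d (a, e) = 0 by omega]
    · simp [colWt, he]
  omega

/-- Split off one factor `x_{a1} x_{b2}` at a time. -/
lemma monomial_mem_arcSpan {n : ℕ} (hn : 0 < n) (k : ℕ) : ∀ d : ZMod n × Fin 2 →₀ ℕ,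
    Finsupp.weight (colWt n 0) d = k → Finsupp.weight (colWt n 1) d = k →
    MvPolynomial.monomial d (1 : ℂ) ∈ arcSpan n k := by
  have : NeZero n := ⟨by omega⟩
  induction k with
  | zero =>
    intro d h0 h1
    have hd : d = 0 := by
      ext ⟨a, c⟩
      by_contra hne
      have hne' : d (a, c) ≠ 0 := hne
      have hle := Finsupp.le_weight (colWt n c) (s := (a, c)) (by simp [colWt]) d
      fin_cases c <;> simp_all
    subst hd
    exact Submodule.subset_span ⟨0, by simp, by simp, by simp⟩
  | succ k ih =>
    intro d h0 h1
    obtain ⟨a, ha⟩ := exists_ne_zero_of_weight h0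
    obtain ⟨b, hb⟩ := exists_ne_zero_of_weight h1
    set s : ZMod n × Fin 2 →₀ ℕ := Finsupp.single (a, 0) 1 + Finsupp.single (b, 1) 1 with hs
    have hle : s ≤ d := by
      rintro ⟨x, c⟩
      fin_cases c
      · by_cases hx : a = x <;> simp [hs, hx]
        subst hx; exact ha
      · by_cases hx : b = x <;> simp [hs, hx]
        subst hx; exact hb
    obtain ⟨e, rfl⟩ := exists_add_of_le hle
    have w0 : Finsupp.weight (colWt n 0) s = 1 := by
      simp [hs, Finsupp.weight_single, colWt]
    have w1 : Finsupp.weight (colWt n 1) s = 1 := by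
      simp [hs, Finsupp.weight_single, colWt]
    rw [map_add] at h0 h1
    have he := ih e (by omega) (by omega)
    have hmon : MvPolynomial.monomial (s + e) (1 : ℂ) = MvPolynomial.monomial e 1 *
        (MvPolynomial.X ((a.val : ZMod n), 0) * MvPolynomial.X ((b.val : ZMod n), 1)) := by
      simp only [ZMod.natCast_val, ZMod.cast_id', id, MvPolynomial.X, MvPolynomial.monomial_mul,
        mul_one, ← hs, add_comm]
    obtain ⟨c, d, hcd⟩ := X_mul_X_eq a.val_lt b.val_lt
    rw [hmon, hcd, mul_add, mul_smul_comm, mul_smul_comm]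
    exact Submodule.add_mem _ (Submodule.smul_mem _ _ (arcSpan_mul he ⟨a.val_lt, b.val_lt⟩))
      (Submodule.smul_mem _ _ (arcSpan_mul he ⟨b.val_lt, a.val_lt⟩))

/-- The space of polynomials homogeneous of degree `k` in each of the two columns. -/
noncomputable abbrev bihom (n k : ℕ) : Submodule ℂ (MvPolynomial (ZMod n × Fin 2) ℂ) :=
  MvPolynomial.weightedHomogeneousSubmodule ℂ (colWt n 0) k ⊓
    MvPolynomial.weightedHomogeneousSubmodule ℂ (colWt n 1) k

lemma bihom_le_span {n : ℕ} (hn : 0 < n) (k : ℕ) :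
    bihom n k ≤ Submodule.span ℂ (Set.range fun g : CDiss n k => zC n g.1) := by
  have h1 : arcSpan n k ≤ Submodule.span ℂ (Set.range fun g : CDiss n k => zC n g.1) := by
    unfold arcSpan
    rw [Submodule.span_le]
    rintro _ ⟨M, hM, hk, rfl⟩
    exact prod_arcVar_mem_span hn k _ M hM hk rfl
  refine le_trans ?_ h1
  rintro P ⟨h0, h1⟩
  rw [MvPolynomial.as_sum P]
  refine Submodule.sum_mem _ fun d hd => ?_
  rw [MvPolynomial.mem_support_iff] at hd
  rw [← mul_one (P.coeff d), ← smul_eq_mul, ← MvPolynomial.smul_monomial]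
  exact Submodule.smul_mem _ _ (monomial_mem_arcSpan hn k d (h0 hd) (h1 hd))

/-! ### Homogeneity and the count of C-multidissections -/

lemma isWeightedHomogeneous_vecFst (n i : ℕ) (c : Fin 2) :
    (vecFst n i).IsWeightedHomogeneous (colWt n c) (if 0 = c then 1 else 0) := by
  have hX : (MvPolynomial.X ((i : ZMod n), 0) :
      MvPolynomial (ZMod n × Fin 2) ℂ).IsWeightedHomogeneous (colWt n c) (if 0 = c then 1 else 0) :=
    MvPolynomial.isWeightedHomogeneous_X ℂ (colWt n c) _
  unfold vecFst
  by_cases h : i < n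
  · rwa [if_pos h]
  · rw [if_neg h]; exact hX.C_mul _

lemma isWeightedHomogeneous_vecSnd (n i : ℕ) (c : Fin 2) :
    (vecSnd n i).IsWeightedHomogeneous (colWt n c) (if 1 = c then 1 else 0) := by
  have hX : (MvPolynomial.X ((i : ZMod n), 1) :
      MvPolynomial (ZMod n × Fin 2) ℂ).IsWeightedHomogeneous (colWt n c) (if 1 = c then 1 else 0) :=
    MvPolynomial.isWeightedHomogeneous_X ℂ (colWt n c) _
  unfold vecSnd
  by_cases h : i < n
  · rwa [if_pos h]
  · rw [if_neg h]; exact hX.C_mul _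

lemma isWeightedHomogeneous_arcVar (n : ℕ) (p : ℕ × ℕ) (c : Fin 2) :
    (arcVar n p).IsWeightedHomogeneous (colWt n c) 1 := by
  have key : ∀ i j, (chordDet n i j).IsWeightedHomogeneous (colWt n c) 1 := by
    intro i j
    have h1 := (isWeightedHomogeneous_vecFst n i c).mul (isWeightedHomogeneous_vecSnd n j c)
    have h2 := (isWeightedHomogeneous_vecSnd n i c).mul (isWeightedHomogeneous_vecFst n j c)
    have e1 : (if 0 = c then 1 else 0) + (if 1 = c then 1 else 0) = 1 := by fin_cases c <;> rfl
    rw [add_comm, e1] at h2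
    rw [e1] at h1
    exact (h1.sub h2).C_mul _
  unfold arcVar
  split_ifs <;> exact key _ _

lemma prod_pow_isWeightedHomogeneous {n : ℕ} {c : Fin 2}
    (Y : ℕ → ℕ → MvPolynomial (ZMod n × Fin 2) ℂ)
    (hY : ∀ a b, (Y a b).IsWeightedHomogeneous (colWt n c) 1) (m : ℕ → ℕ → ℕ) :
    (∏ a ∈ range n, ∏ b ∈ range n, Y a b ^ m a b).IsWeightedHomogeneous (colWt n c)
      (∑ a ∈ range n, ∑ b ∈ range n, m a b) := by
  refine MvPolynomial.IsWeightedHomogeneous.prod _ _ _ fun a _ =>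
    MvPolynomial.IsWeightedHomogeneous.prod _ _ _ fun b _ => ?_
  simpa using (hY a b).pow (m a b)

lemma CDiss.sum_arcMult {n k : ℕ} (g : CDiss n k) :
    ∑ a ∈ range n, ∑ b ∈ range n, arcMult n g.1 a b = k := by
  have := g.2.1.cEdges2_eq
  rw [g.2.2] at this
  omega

lemma zC_mem_bihom {n k : ℕ} (g : CDiss n k) : zC n g.1 ∈ bihom n k := by
  have h : ∀ c, (zC n g.1).IsWeightedHomogeneous (colWt n c) k := by
    intro c
    have := prod_pow_isWeightedHomogeneous (fun a b => arcVar n (a, b))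
      (fun a b => isWeightedHomogeneous_arcVar n (a, b) c) (arcMult n g.1)
    rwa [g.sum_arcMult, ← g.2.1.zC_eq] at this
  exact ⟨h 0, h 1⟩

/-- The exponent recording in column `0` the number of arcs starting at each vertex, and in
column `1` the number of arcs ending there. -/
noncomputable def margins (n : ℕ) (g : ZMod (2*n) → ZMod (2*n) → ℕ) : ZMod n × Fin 2 →₀ ℕ :=
  ∑ a ∈ range n, ∑ b ∈ range n, arcMult n g a b •
    (Finsupp.single ((a : ZMod n), 0) 1 + Finsupp.single ((b : ZMod n), 1) 1)

lemma monomial_margins_mem {n k : ℕ} (g : CDiss n k) :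
    MvPolynomial.monomial (margins n g.1) (1 : ℂ) ∈ bihom n k := by
  have hY : ∀ c (a b : ℕ), (MvPolynomial.X ((a : ZMod n), 0) * MvPolynomial.X ((b : ZMod n), 1) :
      MvPolynomial (ZMod n × Fin 2) ℂ).IsWeightedHomogeneous (colWt n c) 1 := by
    intro c a b
    have := (MvPolynomial.isWeightedHomogeneous_X ℂ (colWt n c) ((a : ZMod n), 0)).mul
      (MvPolynomial.isWeightedHomogeneous_X ℂ (colWt n c) ((b : ZMod n), 1))
    have e1 : colWt n c ((a : ZMod n), 0) + colWt n c ((b : ZMod n), 1) = 1 := by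
      fin_cases c <;> rfl
    rwa [e1] at this
  have e : MvPolynomial.monomial (margins n g.1) (1 : ℂ) = ∏ a ∈ range n, ∏ b ∈ range n,
      (MvPolynomial.X ((a : ZMod n), 0) * MvPolynomial.X ((b : ZMod n), 1)) ^ arcMult n g.1 a b := by
    simp only [margins, MvPolynomial.monomial_sum_one, MvPolynomial.X, MvPolynomial.monomial_mul,
      MvPolynomial.monomial_pow, mul_one, one_pow]
  have h : ∀ c, (MvPolynomial.monomial (margins n g.1) (1 : ℂ)).IsWeightedHomogeneous
      (colWt n c) k := by
    intro c
    have := prod_pow_isWeightedHomogeneous _ (hY c) (arcMult n g.1)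
    rwa [g.sum_arcMult, ← e] at this
  exact ⟨h 0, h 1⟩

lemma margins_fst {n : ℕ} (g : ZMod (2*n) → ZMod (2*n) → ℕ) {a : ℕ} (ha : a < n) :
    margins n g ((a : ZMod n), 0) = ∑ b ∈ range n, arcMult n g a b := by
  simp only [margins, Finsupp.finsetSum_apply, Finsupp.smul_apply, Finsupp.add_apply,
    Finsupp.single_apply, Prod.mk.injEq, smul_eq_mul]
  rw [sum_eq_single_of_mem a (mem_range.2 ha)]
  · simp
  · intro x hx hxa
    simp [natCast_inj_of_lt (mem_range.1 hx) ha, hxa]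

lemma margins_snd {n : ℕ} (g : ZMod (2*n) → ZMod (2*n) → ℕ) {b : ℕ} (hb : b < n) :
    margins n g ((b : ZMod n), 1) = ∑ a ∈ range n, arcMult n g a b := by
  simp only [margins, Finsupp.finsetSum_apply, Finsupp.smul_apply, Finsupp.add_apply,
    Finsupp.single_apply, Prod.mk.injEq, smul_eq_mul]
  refine sum_congr rfl fun a _ => ?_
  rw [sum_eq_single_of_mem b (mem_range.2 hb)]
  · simp
  · intro x hx hxb
    simp [natCast_inj_of_lt (mem_range.1 hx) hb, hxb]

lemma margins_injective {n k : ℕ} (hn : 0 < n) :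
    Function.Injective fun g : CDiss n k => margins n g.1 := by
  intro g h hgh
  refine Subtype.ext (g.2.1.eq_of_margins hn h.2.1 (fun a ha => ?_) fun b hb => ?_)
  · rw [← margins_fst _ ha, ← margins_fst _ ha]; exact DFunLike.congr_fun hgh _
  · rw [← margins_snd _ hb, ← margins_snd _ hb]; exact DFunLike.congr_fun hgh _

lemma CDiss.finite {n : ℕ} (hn : 0 < n) (k : ℕ) : Finite (CDiss n k) := by
  have hle : ∀ (g : CDiss n k) (p : Fin n × Fin n), arcMult n g.1 p.1 p.2 < k + 1 := by
    intro g p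
    have h1 : arcMult n g.1 p.1 p.2 ≤ ∑ b ∈ range n, arcMult n g.1 p.1 b :=
      single_le_sum (f := fun b => arcMult n g.1 p.1 b) (fun _ _ => Nat.zero_le _)
        (mem_range.2 p.2.2)
    have h2 : ∑ b ∈ range n, arcMult n g.1 p.1 b ≤ _ :=
      single_le_sum (f := fun a => ∑ b ∈ range n, arcMult n g.1 a b) (fun _ _ => Nat.zero_le _)
        (mem_range.2 p.1.2)
    rw [g.sum_arcMult] at h2
    omega
  refine Finite.of_injective
    (fun (g : CDiss n k) (p : Fin n × Fin n) => (⟨_, hle g p⟩ : Fin (k + 1))) fun g h hgh => ?_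
  refine Subtype.ext (IsCMulti.ext hn g.2.1 h.2.1 fun a ha b hb => ?_)
  exact congrArg Fin.val (congrFun hgh (⟨a, ha⟩, ⟨b, hb⟩))

end CMultidissections

/-- Fomin–Zelevinsky, Proposition 12.13.  Let `n ≥ 2` and `k ≥ 0`.
The cluster monomials `z_f^C`, as `f` ranges over all C-multidissections of `P_{2n}`
with exactly `k` edges, form a `ℂ`-basis of `V^C(n,k)`, the space of polynomials in
`ℂ[x]` that are homogeneous of degree `k` in the first column of variables
`x_{11},…,x_{n1}` and homogeneous of degree `k` in the second column `x_{12},…,x_{n2}`. -/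
theorem statement8 (n k : ℕ) (hn : 2 ≤ n) :
    LinearIndependent ℂ
      (fun g : {g : ZMod (2*n) → ZMod (2*n) → ℕ //
          IsCMulti n g ∧ cEdges2 n g = 2 * k} => zC n g.1) ∧
    Submodule.span ℂ
        (Set.range (fun g : {g : ZMod (2*n) → ZMod (2*n) → ℕ //
          IsCMulti n g ∧ cEdges2 n g = 2 * k} => zC n g.1)) =
      MvPolynomial.weightedHomogeneousSubmodule ℂ (colWt n 0) k ⊓
        MvPolynomial.weightedHomogeneousSubmodule ℂ (colWt n 1) k := by
  have hn0 : 0 < n := by omega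
  have hspan : Submodule.span ℂ (Set.range fun g : CDiss n k => zC n g.1) = bihom n k := by
    refine le_antisymm (Submodule.span_le.2 ?_) (bihom_le_span hn0 k)
    rintro _ ⟨g, rfl⟩
    exact zC_mem_bihom g
  refine ⟨?_, hspan⟩
  have := CDiss.finite hn0 k
  have := Fintype.ofFinite (CDiss n k)
  have hfd : FiniteDimensional ℂ (Submodule.span ℂ (Set.range fun g : CDiss n k => zC n g.1)) :=
    FiniteDimensional.span_of_finite ℂ (Set.finite_range _)
  -- as many linearly independent elements of `bihom n k` as there are C-multidissections
  have hmon : LinearIndependent ℂ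
      fun g : CDiss n k => MvPolynomial.monomial (margins n g.1) (1 : ℂ) := by
    have := (MvPolynomial.basisMonomials (ZMod n × Fin 2) ℂ).linearIndependent.comp _
      (margins_injective (k := k) hn0)
    simpa [Function.comp_def] using this
  rw [linearIndependent_iff_card_le_finrank_span, ← finrank_span_eq_card hmon, Set.finrank]
  refine Submodule.finrank_mono ?_
  rw [hspan, Submodule.span_le]
  rintro _ ⟨g, rfl⟩
  exact monomial_margins_mem g
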